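/- The functions ψ_l satisfy: (i) ψ₀ is twice continuously differentiable on (0,∞)×ℝ and v ∂ₓψ₀(x,v) = ∂_vvψ₀(x,v) for all (x,v) ∈ (0,∞)×ℝ; (ii) there exists a nonzero constant c* such that ψ₀(x,v) → c* v² as x → 0⁺, for every fixed v > 0; (iii) for every integer l ≥ 1, ∂ₓψ_l = ((3l+2)/3) ψ_{l−1} on (0,∞)×ℝ; (iv) for every ε ∈ (0, 1/3) there is c(ε) > 0 such that |ψ₀(x₁,v) − ψ₀(x₂,v)| ≤ c(ε) |x₁ − x₂|^{1−ε} whenever v ∈ (0,1] and 0 < x₁, x₂ ≤ v^{1/ε}; (v) for every integer k ≥ 0 there is c(k) > 0 such that |∂_v^k ψ₀(x,v)| ≤ c(k) whenever v ∈ (0,1], 0 < x ≤ v^{k+1} and x ≤ v³. -/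

import Mathlib

/-!
The functions `ψ_l` are self-similar, `ψ_l(x, v) = x ^ (d / 3) F(v / x ^ (1 / 3))` with
`d = 3l + 2`, and the equation `v ∂ₓψ = ∂ᵥᵥψ` becomes the profile equation `3F'' = d y F - y² F'`,
which is Kummer's equation in the variable `z = -y³ / 9`.

For `d = 2` one has `F(0), F'(0) > 0`, and comparison arguments give `F > 0`, `F' ≥ 0` and
`y F' ≤ 2F` for `y ≥ 0`, so `F / y²` decreases. Comparison with a multiple of `y² + 6y` keeps it
away from zero, so it has a positive limit, which is the constant `c*`. Each differentiated profile
equation has the form `u' + (y² / 3) u = f`, for which `f = O(y ^ (n + 2))` implies `u = O(y ^ n)`.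
This yields `F⁽ᵏ⁾ = O(y ^ (2 - k))` for `k ≤ 2` and `F⁽ᵏ⁾ = O(y ^ (-k - 1))` for `k ≥ 3`. In the
region `x ≤ v³`, that is `v / x ^ (1 / 3) ≥ 1`, scaling back gives the bounds on `ψ₀`.

The formula for `∂ₓψ_l` is the identity
`d/dx (x ^ p M(-p, b, c / x)) = p x ^ (p - 1) M(1 - p, b, c / x)` combined with the recursion for
`C_l` that follows from the functional equation of `Γ`.
-/

noncomputable section

open MeasureTheory Set Filter
open scoped ENNReal

/-- The one-dimensional phase space, with points `p = (x, v)`. -/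
abbrev P2 : Type := ℝ × ℝ

/-- `hv` is the weak derivative of `h` in the second (velocity) variable on `D`. -/
def IsWeakVDeriv (D : Set P2) (h hv : P2 → ℝ) : Prop :=
  ∀ ψ : P2 → ℝ, ContDiff ℝ ((⊤ : ℕ∞) : WithTop ℕ∞) ψ → HasCompactSupport ψ →
    tsupport ψ ⊆ D →
    (∫ p in D, h p * fderiv ℝ ψ p ((0:ℝ), (1:ℝ))) = -∫ p in D, hv p * ψ p

/-- Kummer's confluent hypergeometric function `M(a,b,z) = Σ ((a)_k/(b)_k) z^k/k!`. -/
def kummerM (a b z : ℝ) : ℝ :=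
  ∑' k : ℕ, ((ascPochhammer ℝ k).eval a / (ascPochhammer ℝ k).eval b) * z ^ k /
    (Nat.factorial k : ℝ)

/-- The explicit solutions `ψ_l`. -/
def psiL (l : ℕ) (x v : ℝ) : ℝ :=
  x ^ ((3 * (l : ℝ) + 2) / 3) *
    (kummerM (-(3 * (l : ℝ) + 2) / 3) (2/3) (-(v ^ 3) / (9 * x))
      + (Real.Gamma (2/3) * Real.Gamma (-(3 * (l : ℝ) + 1) / 3))
          / (Real.Gamma (-(3 * (l : ℝ) + 2) / 3) * Real.Gamma (4/3))
        * (v / (9 * x) ^ ((1:ℝ)/3)) * kummerM (-(3 * (l : ℝ) + 1) / 3) (4/3)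
            (-(v ^ 3) / (9 * x)))

/-- partial derivative in the first (space) variable -/
def pdx (h : P2 → ℝ) : P2 → ℝ := fun p => fderiv ℝ h p ((1:ℝ), (0:ℝ))

/-- partial derivative in the second (velocity) variable -/
def pdv (h : P2 → ℝ) : P2 → ℝ := fun p => fderiv ℝ h p ((0:ℝ), (1:ℝ))

open Asymptotics FormalMultilinearSeries
open scoped ContDiff Topology

/-! ### Kummer's function -/

section Kummer

/-- The `k`-th Taylor coefficient of `kummerM a b` at `0`. -/
def kummerCoeff (a b : ℝ) (k : ℕ) : ℝ :=
  (ascPochhammer ℝ k).eval a / (ascPochhammer ℝ k).eval b / (k.factorial : ℝ)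

/-- The power series of `kummerM a b` at `0`. -/
def kummerSeries (a b : ℝ) : FormalMultilinearSeries ℝ ℝ ℝ :=
  ofScalars ℝ (kummerCoeff a b)

variable (a b z : ℝ)

lemma ascPochhammer_succ_eval_left (k : ℕ) :
    (ascPochhammer ℝ (k + 1)).eval a = a * (ascPochhammer ℝ k).eval (a + 1) := by
  simp [ascPochhammer_succ_left, Polynomial.eval_comp]

lemma kummerCoeff_zero : kummerCoeff a b 0 = 1 := by
  simp [kummerCoeff]

lemma kummerCoeff_succ (k : ℕ) :
    kummerCoeff a b (k + 1) = (a + k) / (b + k) * (1 / ((k : ℝ) + 1)) * kummerCoeff a b k := by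
  simp only [kummerCoeff, ascPochhammer_succ_eval, Nat.factorial_succ, Nat.cast_mul, Nat.cast_succ,
    div_eq_mul_inv, mul_inv]
  ring

lemma succ_mul_kummerCoeff_succ (k : ℕ) :
    (k + 1) * kummerCoeff a b (k + 1) = a / b * kummerCoeff (a + 1) (b + 1) k := by
  have hk : (k : ℝ) + 1 ≠ 0 := by positivity
  simp only [kummerCoeff, ascPochhammer_succ_eval_left, Nat.factorial_succ, Nat.cast_mul,
    Nat.cast_succ, mul_div_mul_comm a]
  field_simp

lemma add_mul_kummerCoeff (k : ℕ) :
    (a + k) * kummerCoeff a b k = a * kummerCoeff (a + 1) b k := by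
  have h : (ascPochhammer ℝ k).eval a * (a + k) = a * (ascPochhammer ℝ k).eval (a + 1) := by
    rw [← ascPochhammer_succ_eval, ascPochhammer_succ_eval_left]
  simp only [kummerCoeff, ← mul_div_assoc, ← h, mul_comm _ (a + (k : ℝ))]

/-- For `b = -n` the coefficients beyond the `n`-th vanish, by the convention `x / 0 = 0`. -/
lemma kummerSeries_radius : (kummerSeries a b).radius = ⊤ := by
  have hratio : Tendsto (fun k : ℕ => (a + k) / (b + k) * (1 / ((k : ℝ) + 1))) atTop (𝓝 0) := by
    simpa using (tendsto_add_mul_div_add_mul_atTop_nhds a b 1 one_ne_zero).mul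
      (tendsto_one_div_add_atTop_nhds_zero_nat (𝕜 := ℝ))
  refine radius_eq_top_of_summable_norm _ fun r => ?_
  refine summable_of_ratio_norm_eventually_le (r := 1 / 2) (by norm_num) ?_
  have hsmall := (hratio.mul_const (r : ℝ)).norm.eventually_le_const
    (show ‖(0 : ℝ) * r‖ < 1 / 2 by simp)
  filter_upwards [hsmall] with k hk
  simp only [kummerSeries, ofScalars_norm, kummerCoeff_succ, norm_mul, norm_norm, norm_pow,
    pow_succ] at hk ⊢
  nlinarith [mul_le_mul_of_nonneg_right hk
    (by positivity : 0 ≤ ‖kummerCoeff a b k‖ * ‖(r : ℝ)‖ ^ k)]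

lemma kummerM_eq_sum : kummerM a b = (kummerSeries a b).sum := by
  funext z
  simp only [kummerM, FormalMultilinearSeries.sum, kummerSeries, kummerCoeff, ofScalars_apply_eq,
    smul_eq_mul]
  exact tsum_congr fun k => by ring

lemma hasFPowerSeriesOnBall_kummerM :
    HasFPowerSeriesOnBall (kummerM a b) (kummerSeries a b) 0 ⊤ := by
  rw [kummerM_eq_sum, ← kummerSeries_radius a b]
  exact (kummerSeries a b).hasFPowerSeriesOnBall (by simp [kummerSeries_radius])

lemma hasSum_kummerM : HasSum (fun k => kummerCoeff a b k * z ^ k) (kummerM a b z) := by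
  simpa [kummerSeries, ofScalars_apply_eq, mul_comm] using
    (hasFPowerSeriesOnBall_kummerM a b).hasSum (y := z) (by simp)

lemma contDiff_kummerM : ContDiff ℝ ∞ (kummerM a b) :=
  AnalyticOnNhd.contDiff fun z _ =>
    (hasFPowerSeriesOnBall_kummerM a b).analyticAt_of_mem (by simp)

lemma kummerM_zero : kummerM a b 0 = 1 := by
  simpa [kummerCoeff_zero] using (hasSum_kummerM a b 0).unique
    (hasSum_single 0 fun k hk => by simp [hk])

lemma kummerSeries_derivSeries_apply_one (k : ℕ) :
    (kummerSeries a b).derivSeries k (fun _ => z) 1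
      = a / b * (kummerCoeff (a + 1) (b + 1) k * z ^ k) := by
  rw [apply_eq_pow_smul_coeff, _root_.smul_apply, derivSeries_coeff_one, kummerSeries,
    coeff_ofScalars, nsmul_eq_mul, Nat.cast_succ, succ_mul_kummerCoeff_succ, smul_eq_mul]
  ring

lemma deriv_kummerM : deriv (kummerM a b) z = a / b * kummerM (a + 1) (b + 1) z := by
  have hsum := (hasFPowerSeriesOnBall_kummerM a b).fderiv.hasSum (y := z) (by simp)
  have hsum_one := hsum.mapL (ContinuousLinearMap.apply ℝ ℝ (1 : ℝ))
  simp only [zero_add, ContinuousLinearMap.apply_apply, fderiv_apply_one_eq_deriv,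
    kummerSeries_derivSeries_apply_one] at hsum_one
  exact hsum_one.unique ((hasSum_kummerM (a + 1) (b + 1) z).mul_left (a / b))

/-- The Euler operator `z d/dz` multiplies the `k`-th term of the series by `k`. -/
lemma hasSum_natCast_mul_kummerM :
    HasSum (fun k : ℕ => k * (kummerCoeff a b k * z ^ k)) (z * deriv (kummerM a b) z) := by
  rw [deriv_kummerM]
  have hshift : HasSum (fun k : ℕ => ((k + 1 : ℕ) : ℝ) * (kummerCoeff a b (k + 1) * z ^ (k + 1)))
      (z * (a / b * kummerM (a + 1) (b + 1) z)) := by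
    refine (((hasSum_kummerM (a + 1) (b + 1) z).mul_left (a / b)).mul_left z).congr_fun fun k => ?_
    rw [← mul_assoc (a / b), ← succ_mul_kummerCoeff_succ, Nat.cast_succ]
    ring
  simpa only [Finset.sum_range_one, Nat.cast_zero, zero_mul, add_zero] using
    (hasSum_nat_add_iff (f := fun k : ℕ => (k : ℝ) * (kummerCoeff a b k * z ^ k)) 1).1 hshift

lemma kummerM_add_one_left :
    z * deriv (kummerM a b) z + a * kummerM a b z = a * kummerM (a + 1) b z := by
  refine ((hasSum_natCast_mul_kummerM a b z).add ((hasSum_kummerM a b z).mul_left a)).unique ?_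
  refine ((hasSum_kummerM (a + 1) b z).mul_left a).congr_fun fun k => ?_
  linear_combination z ^ k * add_mul_kummerCoeff a b k

variable {b}

lemma add_mul_kummerCoeff_add_one_right (hb : ∀ n : ℕ, b ≠ -n) (k : ℕ) :
    (b + k) * kummerCoeff a (b + 1) k = b * kummerCoeff a b k := by
  have hpoch (m : ℕ) : (ascPochhammer ℝ m).eval b ≠ 0 := by
    simp only [ne_eq, ascPochhammer_eval_eq_zero_iff, not_exists, not_and]
    exact fun n _ hn => hb n (by linarith)
  have h := hpoch (k + 1)
  have hpoch_succ : (ascPochhammer ℝ k).eval b * (b + k)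
      = b * (ascPochhammer ℝ k).eval (b + 1) := by
    rw [← ascPochhammer_succ_eval, ascPochhammer_succ_eval_left]
  rw [ascPochhammer_succ_eval_left] at h
  have h₁ := right_ne_zero_of_mul h
  have h₀ := hpoch k
  simp only [kummerCoeff]
  field_simp
  linear_combination (ascPochhammer ℝ k).eval a * hpoch_succ

lemma kummerM_add_one_right (hb : ∀ n : ℕ, b ≠ -n) :
    z * deriv (kummerM a (b + 1)) z + b * kummerM a (b + 1) z = b * kummerM a b z := by
  refine ((hasSum_natCast_mul_kummerM a (b + 1) z).add
    ((hasSum_kummerM a (b + 1) z).mul_left b)).unique ?_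
  refine ((hasSum_kummerM a b z).mul_left b).congr_fun fun k => ?_
  linear_combination z ^ k * add_mul_kummerCoeff_add_one_right a hb k

lemma kummerM_ode (hb : ∀ n : ℕ, b ≠ -n) :
    z * deriv (deriv (kummerM a b)) z + (b - z) * deriv (kummerM a b) z = a * kummerM a b z := by
  have hb₀ : b ≠ 0 := by simpa using hb 0
  have hderiv : deriv (kummerM a b) = fun w => a / b * kummerM (a + 1) (b + 1) w :=
    funext (deriv_kummerM a b)
  have hdiff := (contDiff_kummerM (a + 1) (b + 1)).differentiable (by simp) z
  have hleft := kummerM_add_one_left a b z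
  have hright := kummerM_add_one_right (a + 1) z hb
  rw [hderiv] at hleft ⊢
  rw [deriv_const_mul _ hdiff]
  field_simp at hleft hright ⊢
  linear_combination a * hright - hleft

end Kummer

/-! ### Linear differential inequalities -/

section LinearODE

variable {a b : ℝ} {P p u u' u'' g g' f q : ℝ → ℝ}

/-- The integrating factor `exp P` makes `exp P * u` monotone. -/
lemma nonneg_of_nonneg_deriv_add_mul (hP : ∀ y ∈ Icc a b, HasDerivAt P (p y) y)
    (hu : ∀ y ∈ Icc a b, HasDerivAt u (u' y) y) (h : ∀ y ∈ Ioo a b, 0 ≤ u' y + p y * u y)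
    (ha : 0 ≤ u a) {y : ℝ} (hy : y ∈ Icc a b) : 0 ≤ u y := by
  have hderiv (t : ℝ) (ht : t ∈ Icc a b) : HasDerivAt (fun s => Real.exp (P s) * u s)
      (Real.exp (P t) * (u' t + p t * u t)) t :=
    ((hP t ht).exp.mul (hu t ht)).congr_deriv (by ring)
  have hmono : MonotoneOn (fun s => Real.exp (P s) * u s) (Icc a b) := by
    refine monotoneOn_of_hasDerivWithinAt_nonneg (convex_Icc a b)
      (fun t ht => (hderiv t ht).continuousAt.continuousWithinAt)
      (fun t ht => (hderiv t (interior_subset ht)).hasDerivWithinAt) fun t ht => ?_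
    rw [interior_Icc] at ht
    exact mul_nonneg (Real.exp_pos _).le (h t ht)
  have hle := hmono (left_mem_Icc.2 (hy.1.trans hy.2)) hy hy.1
  exact nonneg_of_mul_nonneg_right ((mul_nonneg (Real.exp_pos _).le ha).trans hle) (Real.exp_pos _)

/-- As long as `u` is positive, `u'` is nonnegative and `u` increases, so `u` has no first zero. -/
lemma pos_of_second_order_differential_ineq (hP : ∀ y ∈ Ici a, HasDerivAt P (p y) y)
    (hq : ∀ y ∈ Ici a, 0 ≤ q y) (hu : ∀ y ∈ Ici a, HasDerivAt u (u' y) y)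
    (hu' : ∀ y ∈ Ici a, HasDerivAt u' (u'' y) y)
    (h : ∀ y ∈ Ici a, q y * u y ≤ u'' y + p y * u' y) (ha : 0 < u a) (ha' : 0 ≤ u' a) :
    ∀ y ∈ Ici a, 0 < u y := by
  intro y hy
  by_contra! hneg
  have hcont : ContinuousOn u (Icc a y) := fun t ht =>
    (hu t ht.1).continuousAt.continuousWithinAt
  obtain ⟨s, ⟨hs, hus⟩, hfirst⟩ := (isCompact_Icc.of_isClosed_subset
    (hcont.preimage_isClosed_of_isClosed isClosed_Icc isClosed_Iic)
    inter_subset_left).exists_isLeast ⟨y, right_mem_Icc.2 hy, hneg⟩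
  have hpos (t : ℝ) (ht : t ∈ Ioo a s) : 0 < u t := by
    by_contra! hut
    exact ht.2.not_ge (hfirst ⟨⟨ht.1.le, ht.2.le.trans hs.2⟩, hut⟩)
  have hnonneg (t : ℝ) (ht : t ∈ Icc a s) : 0 ≤ u' t :=
    nonneg_of_nonneg_deriv_add_mul (fun r hr => hP r hr.1) (fun r hr => hu' r hr.1)
      (fun r hr => (mul_nonneg (hq r hr.1.le) (hpos r hr).le).trans (h r hr.1.le)) ha' ht
  have hmono : MonotoneOn u (Icc a s) :=
    monotoneOn_of_hasDerivWithinAt_nonneg (convex_Icc a s)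
      (fun t ht => (hu t ht.1).continuousAt.continuousWithinAt)
      (fun t ht => (hu t (interior_subset ht).1).hasDerivWithinAt)
      fun t ht => hnonneg t (interior_subset ht)
  exact (ha.trans_le (hmono (left_mem_Icc.2 hs.1) (right_mem_Icc.2 hs.1) hs.1)).not_ge hus

lemma isBigO_of_supersolution (hP : ∀ᶠ y in atTop, HasDerivAt P (p y) y)
    (hu : ∀ᶠ y in atTop, HasDerivAt u (f y - p y * u y) y)
    (hg : ∀ᶠ y in atTop, HasDerivAt g (g' y) y) (hgpos : ∀ᶠ y in atTop, 0 < g y)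
    (hsuper : ∀ᶠ y in atTop, 0 ≤ g' y + p y * g y)
    (hf : f =O[atTop] fun y => g' y + p y * g y) : u =O[atTop] g := by
  obtain ⟨C, hC⟩ := hf.bound
  obtain ⟨b, hb⟩ :=
    (hP.and (hu.and (hg.and (hgpos.and (hsuper.and hC))))).exists_forall_of_atTop
  simp only [Real.norm_eq_abs] at hb
  have hgb : 0 < g b := (hb b le_rfl).2.2.2.1
  set K := max C (|u b| / g b)
  refine IsBigO.of_bound K (eventually_atTop.2 ⟨b, fun y hy => ?_⟩)
  have hfK (t : ℝ) (ht : b ≤ t) : |f t| ≤ K * (g' t + p t * g t) := by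
    obtain ⟨-, -, -, -, hs, hft⟩ := hb t ht
    rw [abs_of_nonneg hs] at hft
    exact hft.trans (mul_le_mul_of_nonneg_right (le_max_left _ _) hs)
  have hub : |u b| ≤ K * g b := (div_le_iff₀ hgb).1 (le_max_right _ _)
  have hKg (t : ℝ) (ht : b ≤ t) := (hb t ht).2.2.1.const_mul K
  have hP' (t : ℝ) (ht : t ∈ Icc b y) := (hb t ht.1).1
  have hupper : 0 ≤ K * g y - u y :=
    nonneg_of_nonneg_deriv_add_mul (u := fun t => K * g t - u t) hP'
      (fun t ht => (hKg t ht.1).sub (hb t ht.1).2.1)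
      (fun t ht => by linarith [(abs_le.1 (hfK t ht.1.le)).2])
      (by linarith [(abs_le.1 hub).2]) (right_mem_Icc.2 hy)
  have hlower : 0 ≤ K * g y + u y :=
    nonneg_of_nonneg_deriv_add_mul (u := fun t => K * g t + u t) hP'
      (fun t ht => (hKg t ht.1).add (hb t ht.1).2.1)
      (fun t ht => by linarith [(abs_le.1 (hfK t ht.1.le)).1])
      (by linarith [(abs_le.1 hub).1]) (right_mem_Icc.2 hy)
  rw [Real.norm_eq_abs, Real.norm_eq_abs, abs_of_pos (hb y hy).2.2.2.1, abs_le]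
  constructor <;> linarith

lemma hasDerivAt_cube_div_nine (y : ℝ) : HasDerivAt (fun t : ℝ => t ^ 3 / 9) (y ^ 2 / 3) y :=
  ((hasDerivAt_pow 3 y).div_const 9).congr_deriv (by push_cast; ring)

lemma isBigO_zpow_of_hasDerivAt (n : ℤ)
    (hu : ∀ᶠ y in atTop, HasDerivAt u (f y - y ^ 2 / 3 * u y) y)
    (hf : f =O[atTop] fun y => y ^ (n + 2)) : u =O[atTop] fun y => y ^ n := by
  have hlarge : ∀ᶠ y : ℝ in atTop, 0 < y ∧ 6 * |(n : ℝ)| ≤ y ^ 3 :=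
    (eventually_gt_atTop 0).and ((tendsto_pow_atTop three_ne_zero).eventually_ge_atTop _)
  have hsuper : ∀ᶠ y : ℝ in atTop,
      y ^ (n + 2) ≤ 6 * (n * y ^ (n - 1) + y ^ 2 / 3 * y ^ n) := by
    filter_upwards [hlarge] with y ⟨hy, hn⟩
    have h₁ : y ^ (n + 2) = y ^ (n - 1) * y ^ 3 := by
      rw [← zpow_natCast y 3, ← zpow_add₀ hy.ne']
      congr 1
      push_cast
      ring
    have h₂ : y ^ 2 * y ^ n = y ^ (n - 1) * y ^ 3 := by
      rw [← h₁, zpow_add₀ hy.ne', mul_comm]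
      norm_cast
    rw [h₁, div_mul_eq_mul_div, h₂]
    nlinarith [mul_le_mul_of_nonneg_left hn (zpow_pos hy (n - 1)).le,
      mul_le_mul_of_nonneg_left (neg_abs_le (n : ℝ)) (zpow_pos hy (n - 1)).le]
  refine isBigO_of_supersolution (.of_forall hasDerivAt_cube_div_nine) hu
    (g' := fun y => n * y ^ (n - 1)) ?_ ?_ ?_ (hf.trans (IsBigO.of_bound 6 ?_))
  · filter_upwards [hlarge] with y hy using hasDerivAt_zpow n y (Or.inl hy.1.ne')
  · filter_upwards [hlarge] with y hy using zpow_pos hy.1 n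
  · filter_upwards [hlarge, hsuper] with y hy h
    linarith [zpow_pos hy.1 (n + 2)]
  · filter_upwards [hlarge, hsuper] with y hy h
    rw [Real.norm_eq_abs, abs_of_pos (zpow_pos hy.1 _)]
    exact h.trans (mul_le_mul_of_nonneg_left (le_abs_self _) (by norm_num))

end LinearODE

section Asymptotics

variable {f g : ℝ → ℝ} {a : ℝ}

lemma exists_forall_Ici_abs_le_mul_of_isBigO_atTop (hf : ContinuousOn f (Ici a))
    (hg : ContinuousOn g (Ici a)) (hpos : ∀ y ∈ Ici a, 0 < g y) (h : f =O[atTop] g) :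
    ∃ C, 0 < C ∧ ∀ y ∈ Ici a, |f y| ≤ C * g y := by
  obtain ⟨C, hC, hbound⟩ := h.exists_pos
  obtain ⟨b, hb⟩ := eventually_atTop.1 hbound.bound
  obtain ⟨B, hB⟩ := isCompact_Icc.exists_bound_of_continuousOn
    ((hf.div hg fun y hy => (hpos y hy).ne').mono (Icc_subset_Ici_self : Icc a b ⊆ Ici a))
  refine ⟨max C B, lt_max_of_lt_left hC, fun y hy => ?_⟩
  have hgy := hpos y hy
  rcases le_total b y with hby | hyb
  · have := hb y hby
    rw [Real.norm_eq_abs, Real.norm_eq_abs, abs_of_pos hgy] at this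
    exact this.trans (mul_le_mul_of_nonneg_right (le_max_left _ _) hgy.le)
  · have := hB y ⟨hy, hyb⟩
    rw [Pi.div_apply, Real.norm_eq_abs, abs_div, abs_of_pos hgy, div_le_iff₀ hgy] at this
    exact this.trans (mul_le_mul_of_nonneg_right (le_max_right _ _) hgy.le)

lemma exists_tendsto_atTop_of_antitoneOn_Ici {m : ℝ} (h : AntitoneOn f (Ici a))
    (hm : ∀ y ∈ Ici a, m ≤ f y) : ∃ c, m ≤ c ∧ Tendsto f atTop (𝓝 c) := by
  have hanti : Antitone fun y => f (max a y) := fun y z hyz =>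
    h (le_max_left a y) (le_max_left a z) (max_le_max_left a hyz)
  have hbdd : BddBelow (range fun y => f (max a y)) :=
    ⟨m, forall_mem_range.2 fun y => hm _ (le_max_left a y)⟩
  refine ⟨_, le_ciInf fun y => hm _ (le_max_left a y),
    (tendsto_atTop_ciInf hanti hbdd).congr' ?_⟩
  filter_upwards [eventually_ge_atTop a] with y hy
  rw [max_eq_right hy]

lemma isBigO_zpow_mul {m n : ℤ} (hf : f =O[atTop] fun y => y ^ m)
    (hg : g =O[atTop] fun y => y ^ n) : (fun y => f y * g y) =O[atTop] fun y => y ^ (m + n) := by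
  refine (hf.mul hg).congr' .rfl ?_
  filter_upwards [eventually_ne_atTop 0] with y hy
  rw [zpow_add₀ hy]

end Asymptotics

/-! ### The profile equation -/

section Profile

/-- `F` is a smooth solution of `3 F'' = d y F - y² F'`, the equation which makes
`x ^ (d / 3) * F (v / x ^ (1 / 3))` a solution of `v ∂ₓψ = ∂ᵥᵥψ`. -/
structure IsProfile (d : ℝ) (F : ℝ → ℝ) : Prop where
  contDiff : ContDiff ℝ ∞ F
  ode : ∀ y, iteratedDeriv 2 F y = (d * y * F y - y ^ 2 * deriv F y) / 3

namespace IsProfile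

variable {d : ℝ} {F G : ℝ → ℝ}

lemma of_hasDerivAt {F' F'' : ℝ → ℝ} (hF : ContDiff ℝ ∞ F) (h : ∀ y, HasDerivAt F (F' y) y)
    (h' : ∀ y, HasDerivAt F' (F'' y) y) (hode : ∀ y, 3 * F'' y = d * y * F y - y ^ 2 * F' y) :
    IsProfile d F where
  contDiff := hF
  ode y := by
    have hderiv : deriv F = F' := funext fun t => (h t).deriv
    rw [iteratedDeriv_succ, iteratedDeriv_one, hderiv, (h' y).deriv]
    linarith [hode y]

lemma add (hF : IsProfile d F) (hG : IsProfile d G) : IsProfile d (F + G) where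
  contDiff := hF.contDiff.add hG.contDiff
  ode y := by
    rw [iteratedDeriv_add (contDiff_infty.1 hF.contDiff 2).contDiffAt
      (contDiff_infty.1 hG.contDiff 2).contDiffAt, hF.ode, hG.ode, Pi.add_apply,
      deriv_add (hF.contDiff.differentiable (by simp) y) (hG.contDiff.differentiable (by simp) y)]
    ring

lemma const_mul (hF : IsProfile d F) (c : ℝ) : IsProfile d fun y => c * F y where
  contDiff := contDiff_const.mul hF.contDiff
  ode y := by
    rw [iteratedDeriv_const_mul_field, hF.ode, deriv_const_mul_field]
    ring

variable (hF : IsProfile d F)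
include hF

lemma hasDerivAt_iteratedDeriv (k : ℕ) (y : ℝ) :
    HasDerivAt (iteratedDeriv k F) (iteratedDeriv (k + 1) F y) y := by
  rw [iteratedDeriv_succ]
  exact (hF.contDiff.differentiable_iteratedDeriv k
    (by exact_mod_cast ENat.natCast_lt_top k) y).hasDerivAt

lemma hasDerivAt (y : ℝ) : HasDerivAt F (deriv F y) y := by
  simpa using hF.hasDerivAt_iteratedDeriv 0 y

lemma hasDerivAt_deriv (y : ℝ) : HasDerivAt (deriv F) (iteratedDeriv 2 F y) y := by
  simpa using hF.hasDerivAt_iteratedDeriv 1 y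

lemma contDiff_iteratedDeriv (k : ℕ) : ContDiff ℝ ∞ (iteratedDeriv k F) := by
  rw [iteratedDeriv_eq_iterate]
  exact hF.contDiff.iterate_deriv k

lemma iteratedDeriv_three (y : ℝ) :
    3 * iteratedDeriv 3 F y
      = d * F y + (d - 2) * y * deriv F y - y ^ 2 * iteratedDeriv 2 F y := by
  have hrhs := ((((hasDerivAt_id y).const_mul d).mul (hF.hasDerivAt y)).sub
    ((hasDerivAt_pow 2 y).mul (hF.hasDerivAt_deriv y))).div_const 3
  rw [(hF.hasDerivAt_iteratedDeriv 2 y).unique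
    (hrhs.congr_of_eventuallyEq (.of_forall hF.ode))]
  simp only [mul_one, id_eq, Nat.cast_ofNat, Nat.add_one_sub_one, pow_one]
  ring

/-- The profile equation differentiated `k + 1` times. -/
lemma iteratedDeriv_add_three (k : ℕ) (y : ℝ) :
    3 * iteratedDeriv (k + 3) F y
      = (k + 1) * (d - k) * iteratedDeriv k F y + (d - 2 * (k + 1)) * y * iteratedDeriv (k + 1) F y
        - y ^ 2 * iteratedDeriv (k + 2) F y := by
  induction k generalizing y with
  | zero => simpa using hF.iteratedDeriv_three y
  | succ k ih =>
    have hlhs := (hF.hasDerivAt_iteratedDeriv (k + 3) y).const_mul 3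
    have hrhs := ((((hF.hasDerivAt_iteratedDeriv k y).const_mul ((k + 1) * (d - k))).add
      (((hasDerivAt_id y).const_mul (d - 2 * (k + 1))).mul
        (hF.hasDerivAt_iteratedDeriv (k + 1) y))).sub
      ((hasDerivAt_pow 2 y).mul (hF.hasDerivAt_iteratedDeriv (k + 2) y)))
    have h := hlhs.unique (hrhs.congr_of_eventuallyEq (.of_forall ih))
    rw [h]
    simp only [mul_one, id_eq, Nat.cast_ofNat, Nat.add_one_sub_one, pow_one, Nat.cast_add,
      Nat.cast_one]
    ring

end IsProfile

lemma ne_neg_natCast_of_pos {b : ℝ} (hb : 0 < b) (n : ℕ) : b ≠ -n := by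
  linarith [n.cast_nonneg (α := ℝ)]

lemma hasDerivAt_neg_cube_div_nine (y : ℝ) :
    HasDerivAt (fun t : ℝ => -t ^ 3 / 9) (-y ^ 2 / 3) y := by
  simpa only [neg_div] using (hasDerivAt_cube_div_nine y).fun_neg

lemma contDiff_kummerM_comp_cube (a b : ℝ) :
    ContDiff ℝ ∞ fun y : ℝ => kummerM a b (-y ^ 3 / 9) :=
  (contDiff_kummerM a b).comp (by fun_prop)

lemma hasDerivAt_kummerM_comp_cube (a b y : ℝ) :
    HasDerivAt (fun t : ℝ => kummerM a b (-t ^ 3 / 9))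
      (deriv (kummerM a b) (-y ^ 3 / 9) * (-y ^ 2 / 3)) y :=
  ((contDiff_kummerM a b).differentiable (by simp) _).hasDerivAt.comp y
    (hasDerivAt_neg_cube_div_nine y)

lemma hasDerivAt_deriv_kummerM_comp_cube (a b y : ℝ) :
    HasDerivAt (fun t : ℝ => deriv (kummerM a b) (-t ^ 3 / 9))
      (deriv (deriv (kummerM a b)) (-y ^ 3 / 9) * (-y ^ 2 / 3)) y := by
  have hdiff : Differentiable ℝ (deriv (kummerM a b)) :=
    (contDiff_infty.1 (contDiff_kummerM a b) 2).differentiable_deriv_two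
  exact (hdiff _).hasDerivAt.comp y (hasDerivAt_neg_cube_div_nine y)

lemma hasDerivAt_deriv_kummerM_comp_cube_mul (a b y : ℝ) :
    HasDerivAt (fun t : ℝ => deriv (kummerM a b) (-t ^ 3 / 9) * (-t ^ 2 / 3))
      (deriv (deriv (kummerM a b)) (-y ^ 3 / 9) * (y ^ 4 / 9)
        - deriv (kummerM a b) (-y ^ 3 / 9) * (2 * y / 3)) y :=
  ((hasDerivAt_deriv_kummerM_comp_cube a b y).mul
    ((hasDerivAt_pow 2 y).fun_neg.div_const 3)).congr_deriv (by push_cast; ring)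

lemma isProfile_kummerM (d : ℝ) : IsProfile d fun y => kummerM (-d / 3) (2 / 3) (-y ^ 3 / 9) :=
  .of_hasDerivAt (contDiff_kummerM_comp_cube _ _) (hasDerivAt_kummerM_comp_cube _ _)
    (hasDerivAt_deriv_kummerM_comp_cube_mul _ _) fun y => by
      linear_combination -3 * y * kummerM_ode (-d / 3) (-y ^ 3 / 9)
        (ne_neg_natCast_of_pos (b := 2 / 3) (by norm_num))

lemma isProfile_mul_kummerM (d : ℝ) :
    IsProfile d fun y => y * kummerM ((1 - d) / 3) (4 / 3) (-y ^ 3 / 9) := by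
  refine .of_hasDerivAt (contDiff_id.mul (contDiff_kummerM_comp_cube _ _))
    (fun y => (hasDerivAt_id y).mul (hasDerivAt_kummerM_comp_cube _ _ y))
    (fun y => ((hasDerivAt_kummerM_comp_cube _ _ y).const_mul 1).add
      ((hasDerivAt_id y).mul (hasDerivAt_deriv_kummerM_comp_cube_mul _ _ y))) fun y => ?_
  simp only [id_eq]
  linear_combination -3 * y ^ 2 * kummerM_ode ((1 - d) / 3) (-y ^ 3 / 9)
    (ne_neg_natCast_of_pos (b := 4 / 3) (by norm_num))

end Profile

section Growth

namespace IsProfile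

variable {d : ℝ} {F : ℝ → ℝ}

section General

variable (hF : IsProfile d F)
include hF

lemma hasDerivAt_mul_sub_mul_deriv (y : ℝ) :
    HasDerivAt (fun t => d * F t - t * deriv F t)
      ((d - 1) * deriv F y - y * iteratedDeriv 2 F y) y :=
  (((hF.hasDerivAt y).const_mul d).sub ((hasDerivAt_id y).mul (hF.hasDerivAt_deriv y))).congr_deriv
    (by simp only [id_eq]; ring)

lemma hasDerivAt_deriv_sub_mul_iteratedDeriv_two (y : ℝ) :
    HasDerivAt (fun t => deriv F t - t * iteratedDeriv 2 F t) (-(y * iteratedDeriv 3 F y)) y :=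
  ((hF.hasDerivAt_deriv y).sub
    ((hasDerivAt_id y).mul (hF.hasDerivAt_iteratedDeriv 2 y))).congr_deriv (by simp)

variable (h₀ : 0 < F 0) (h₁ : 0 < deriv F 0)
include h₀ h₁

lemma pos (hd : 0 ≤ d) {y : ℝ} (hy : 0 ≤ y) : 0 < F y :=
  pos_of_second_order_differential_ineq (p := fun y => y ^ 2 / 3) (q := fun y => d / 3 * y)
    (fun y _ => hasDerivAt_cube_div_nine y) (fun y hy => mul_nonneg (by positivity) hy)
    (fun y _ => hF.hasDerivAt y) (fun y _ => hF.hasDerivAt_deriv y)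
    (fun y _ => by rw [hF.ode]; linarith) h₀ h₁.le y hy

lemma deriv_nonneg (hd : 0 ≤ d) {y : ℝ} (hy : 0 ≤ y) : 0 ≤ deriv F y := by
  refine nonneg_of_nonneg_deriv_add_mul (fun t _ => hasDerivAt_cube_div_nine t)
    (fun t _ => hF.hasDerivAt_deriv t) (fun t ht => ?_) h₁.le (right_mem_Icc.2 hy)
  rw [hF.ode]
  linarith [mul_nonneg (mul_nonneg hd ht.1.le) (hF.pos h₀ h₁ hd ht.1.le).le]

/-- The function `H = dF - yF'` satisfies `yH = 3F''` and `H' + (y²/3)H = (d - 1)F' ≥ 0`. -/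
lemma mul_deriv_le (hd : 1 ≤ d) {y : ℝ} (hy : 0 ≤ y) : y * deriv F y ≤ d * F y := by
  have hd₀ : 0 ≤ d := zero_le_one.trans hd
  refine sub_nonneg.1 (nonneg_of_nonneg_deriv_add_mul (fun t _ => hasDerivAt_cube_div_nine t)
    (fun t _ => hF.hasDerivAt_mul_sub_mul_deriv t) (fun t ht => ?_)
    (by simpa using mul_nonneg hd₀ h₀.le) (right_mem_Icc.2 hy))
  rw [hF.ode]
  linarith [mul_nonneg (sub_nonneg.2 hd) (hF.deriv_nonneg h₀ h₁ hd₀ ht.1.le)]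

lemma deriv_zero_le_deriv (hd : 1 ≤ d) {y : ℝ} (hy : 0 ≤ y) : deriv F 0 ≤ deriv F y := by
  refine monotoneOn_of_hasDerivWithinAt_nonneg (convex_Ici 0)
    (fun t _ => (hF.hasDerivAt_deriv t).continuousAt.continuousWithinAt)
    (fun t _ => (hF.hasDerivAt_deriv t).hasDerivWithinAt) (fun t ht => ?_) (mem_Ici.2 le_rfl) hy hy
  have ht₀ : 0 ≤ t := interior_subset ht
  rw [hF.ode]
  nlinarith [mul_nonneg ht₀ (sub_nonneg.2 (hF.mul_deriv_le h₀ h₁ hd ht₀))]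

end General

variable (hF : IsProfile 2 F) (h₀ : 0 < F 0) (h₁ : 0 < deriv F 0)
include hF h₀ h₁

lemma antitoneOn_div_sq : AntitoneOn (fun y => F y / y ^ 2) (Ici 1) := by
  have hderiv (y : ℝ) (hy : 1 ≤ y) : HasDerivAt (fun y => F y / y ^ 2)
      (-(2 * F y - y * deriv F y) / y ^ 3) y := by
    have hy₀ : y ≠ 0 := by positivity
    refine ((hF.hasDerivAt y).div (hasDerivAt_pow 2 y) (by positivity)).congr_deriv ?_
    field_simp
    ring
  refine antitoneOn_of_hasDerivWithinAt_nonpos (convex_Ici 1)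
    (fun y hy => (hderiv y hy).continuousAt.continuousWithinAt)
    (fun y hy => (hderiv y (interior_subset hy)).hasDerivWithinAt) fun y hy => ?_
  have hy₀ : (0 : ℝ) ≤ y := zero_le_one.trans (interior_subset hy)
  exact div_nonpos_of_nonpos_of_nonneg
    (neg_nonpos.2 (sub_nonneg.2 (hF.mul_deriv_le h₀ h₁ one_le_two hy₀))) (by positivity)

/-- Comparison on `[1, ∞)` with a small multiple of `s = y² + 6y`, for which
`s'' + (y²/3) s' - (2y/3) s = 2 - 2y² ≤ 0`. -/
lemma exists_mul_sq_le : ∃ m, 0 < m ∧ ∀ y, 1 ≤ y → m * y ^ 2 ≤ F y := by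
  have hF₁ := hF.pos h₀ h₁ zero_le_two zero_le_one
  have hF₁' := h₁.trans_le (hF.deriv_zero_le_deriv h₀ h₁ one_le_two zero_le_one)
  obtain ⟨m, hm, hmF, hmF'⟩ : ∃ m, 0 < m ∧ 8 * m ≤ F 1 / 2 ∧ 8 * m ≤ deriv F 1 :=
    ⟨min (F 1 / 2) (deriv F 1) / 8, by positivity, by linarith [min_le_left (F 1 / 2) (deriv F 1)],
      by linarith [min_le_right (F 1 / 2) (deriv F 1)]⟩
  have hs (y : ℝ) : HasDerivAt (fun t : ℝ => m * (t ^ 2 + 6 * t)) (m * (2 * y + 6)) y :=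
    (((hasDerivAt_pow 2 y).add ((hasDerivAt_id y).const_mul 6)).const_mul m).congr_deriv (by simp)
  have hs' (y : ℝ) : HasDerivAt (fun t : ℝ => m * (2 * t + 6)) (m * 2) y :=
    ((((hasDerivAt_id y).const_mul 2).add_const 6).const_mul m).congr_deriv (by simp)
  refine ⟨m, hm, fun y hy => ?_⟩
  have hpos := pos_of_second_order_differential_ineq
    (p := fun y => y ^ 2 / 3) (q := fun y => 2 / 3 * y) (a := 1)
    (fun y _ => hasDerivAt_cube_div_nine y)
    (fun y hy => mul_nonneg (by norm_num) (zero_le_one.trans hy))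
    (fun y _ => (hF.hasDerivAt y).sub (hs y)) (fun y _ => (hF.hasDerivAt_deriv y).sub (hs' y))
    (fun y hy => by
      rw [hF.ode, Pi.sub_apply]
      nlinarith [mul_nonneg hm.le (sub_nonneg.2 (one_le_pow₀ hy (n := 2)))])
    (by simp only [Pi.sub_apply]; linarith) (by linarith) y hy
  simp only [Pi.sub_apply] at hpos
  nlinarith [mul_nonneg hm.le (zero_le_one.trans hy)]

lemma exists_tendsto_div_sq :
    ∃ c, 0 < c ∧ Tendsto (fun y => F y / y ^ 2) atTop (𝓝 c) := by
  obtain ⟨m, hm, hmF⟩ := hF.exists_mul_sq_le h₀ h₁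
  obtain ⟨c, hmc, hc⟩ := exists_tendsto_atTop_of_antitoneOn_Ici (m := m)
    (hF.antitoneOn_div_sq h₀ h₁) fun y hy =>
      (le_div_iff₀ (by have : (1 : ℝ) ≤ y := hy; positivity)).2 (hmF y hy)
  exact ⟨c, hm.trans_le hmc, hc⟩

lemma isBigO_zpow_two : F =O[atTop] fun y => y ^ (2 : ℤ) := by
  obtain ⟨c, -, hc⟩ := hF.exists_tendsto_div_sq h₀ h₁
  refine isBigO_of_div_tendsto_nhds ?_ c (by exact_mod_cast hc)
  filter_upwards [eventually_ne_atTop 0] with y hy h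
  exact absurd h (zpow_ne_zero _ hy)

lemma isBigO_deriv : deriv F =O[atTop] fun y => y ^ (1 : ℤ) := by
  obtain ⟨C, hC⟩ := (hF.isBigO_zpow_two h₀ h₁).bound
  refine IsBigO.of_bound (2 * C) ?_
  filter_upwards [hC, eventually_gt_atTop 0] with y hCy hy
  rw [zpow_one, Real.norm_eq_abs, Real.norm_eq_abs,
    abs_of_nonneg (hF.deriv_nonneg h₀ h₁ zero_le_two hy.le), abs_of_pos hy]
  rw [Real.norm_eq_abs, Real.norm_eq_abs, abs_of_pos (hF.pos h₀ h₁ zero_le_two hy.le),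
    abs_of_pos (zpow_pos hy 2)] at hCy
  refine le_of_mul_le_mul_left ((hF.mul_deriv_le h₀ h₁ one_le_two hy.le).trans ?_) hy
  have hsq : y ^ (2 : ℤ) = y * y := zpow_two y
  rw [hsq] at hCy
  linarith

lemma isBigO_iteratedDeriv_two : iteratedDeriv 2 F =O[atTop] fun y => y ^ (0 : ℤ) := by
  refine isBigO_zpow_of_hasDerivAt (f := fun y => 2 / 3 * F y) 0 (.of_forall fun y => ?_)
    ((hF.isBigO_zpow_two h₀ h₁).const_mul_left _)
  exact (hF.hasDerivAt_iteratedDeriv 2 y).congr_deriv (by linarith [hF.iteratedDeriv_three y])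

lemma isBigO_deriv_sub_mul_iteratedDeriv_two :
    (fun y => deriv F y - y * iteratedDeriv 2 F y) =O[atTop] fun y => y ^ (-2 : ℤ) := by
  refine isBigO_zpow_of_hasDerivAt (f := fun y => -iteratedDeriv 2 F y) (-2)
    (.of_forall fun y => ?_) (hF.isBigO_iteratedDeriv_two h₀ h₁).neg_left
  refine (hF.hasDerivAt_deriv_sub_mul_iteratedDeriv_two y).congr_deriv ?_
  linear_combination -y / 3 * hF.iteratedDeriv_three y + hF.ode y

/-- Past the second order the derivatives decay faster than `F ~ c y²` suggests: for `d = 2` the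
recurrence for `F''''` involves only `F' - yF'' = O(y⁻²)` besides `F'''`. -/
lemma isBigO_iteratedDeriv_three : iteratedDeriv 3 F =O[atTop] fun y => y ^ (-4 : ℤ) := by
  refine isBigO_zpow_of_hasDerivAt (f := fun y => 2 / 3 * (deriv F y - y * iteratedDeriv 2 F y))
    (-4) (.of_forall fun y => ?_)
    ((hF.isBigO_deriv_sub_mul_iteratedDeriv_two h₀ h₁).const_mul_left _)
  refine (hF.hasDerivAt_iteratedDeriv 3 y).congr_deriv ?_
  have h := hF.iteratedDeriv_add_three 1 y
  simp only [Nat.reduceAdd, Nat.cast_one, iteratedDeriv_one] at h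
  linarith

lemma isBigO_iteratedDeriv_add_three (k : ℕ) :
    iteratedDeriv (k + 3) F =O[atTop] fun y => y ^ (-(k + 4) : ℤ) := by
  have hid : (fun y : ℝ => y) =O[atTop] fun y => y ^ (1 : ℤ) := by
    simpa only [zpow_one] using isBigO_refl _ _
  induction k using Nat.twoStepInduction with
  | zero => exact hF.isBigO_iteratedDeriv_three h₀ h₁
  | one =>
    refine isBigO_zpow_of_hasDerivAt (f := fun y => -4 / 3 * (y * iteratedDeriv 3 F y)) _
      (.of_forall fun y => ?_)
      ((isBigO_zpow_mul hid (hF.isBigO_iteratedDeriv_three h₀ h₁)).const_mul_left _)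
    refine (hF.hasDerivAt_iteratedDeriv 4 y).congr_deriv ?_
    have h := hF.iteratedDeriv_add_three 2 y
    simp only [Nat.reduceAdd, Nat.cast_ofNat] at h
    linarith
  | more k ih₀ ih₁ =>
    have hy := isBigO_zpow_mul hid ih₁
    have hexp : (1 + -(((k + 1 : ℕ) : ℤ) + 4)) = -(k + 4) := by push_cast; ring
    rw [hexp] at hy
    refine isBigO_zpow_of_hasDerivAt (f := fun y =>
      (k + 4) * (-1 - k) / 3 * iteratedDeriv (k + 3) F y
        + (-6 - 2 * k) / 3 * (y * iteratedDeriv (k + 4) F y)) _ (.of_forall fun y => ?_) ?_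
    · refine (hF.hasDerivAt_iteratedDeriv (k + 5) y).congr_deriv ?_
      have h := hF.iteratedDeriv_add_three (k + 3) y
      push_cast at h
      linarith
    · have hexp' : -(((k + 2 : ℕ) : ℤ) + 4) + 2 = -(k + 4) := by push_cast; ring
      rw [hexp']
      exact (ih₀.const_mul_left _).add (hy.const_mul_left _)

lemma exists_abs_iteratedDeriv_le_of_le_two {k : ℕ} (hk : k ≤ 2) :
    ∃ C, 0 < C ∧ ∀ y ∈ Ici (1 : ℝ), |iteratedDeriv k F y| ≤ C * y ^ (2 - k) := by
  refine exists_forall_Ici_abs_le_mul_of_isBigO_atTop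
    (hF.contDiff_iteratedDeriv k).continuous.continuousOn (by fun_prop)
    (fun y hy => pow_pos (one_pos.trans_le hy) _) ?_
  interval_cases k
  · simpa using hF.isBigO_zpow_two h₀ h₁
  · simpa using hF.isBigO_deriv h₀ h₁
  · simpa using hF.isBigO_iteratedDeriv_two h₀ h₁

lemma exists_abs_iteratedDeriv_le_of_two_lt {k : ℕ} (hk : 2 < k) :
    ∃ C, 0 < C ∧ ∀ y ∈ Ici (1 : ℝ), |iteratedDeriv k F y| ≤ C * (y ^ (k + 1))⁻¹ := by
  have hpos (y : ℝ) (hy : y ∈ Ici (1 : ℝ)) : 0 < y ^ (k + 1) := pow_pos (one_pos.trans_le hy) _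
  refine exists_forall_Ici_abs_le_mul_of_isBigO_atTop
    (hF.contDiff_iteratedDeriv k).continuous.continuousOn
    ((by fun_prop : ContinuousOn (fun y : ℝ => y ^ (k + 1)) (Ici 1)).inv₀
      fun y hy => (hpos y hy).ne') (fun y hy => inv_pos.2 (hpos y hy)) ?_
  obtain ⟨j, rfl⟩ : ∃ j, k = j + 3 := Nat.exists_eq_add_of_le' hk
  have h := hF.isBigO_iteratedDeriv_add_three h₀ h₁ j
  simp only [zpow_neg] at h
  exact_mod_cast h

end IsProfile

end Growth

/-! ### Self-similar functions -/

section SelfSimilar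

variable {x v : ℝ}

lemma rpow_one_third_pow_three (hx : 0 ≤ x) : (x ^ (1 / 3 : ℝ)) ^ 3 = x := by
  rw [← Real.rpow_mul_natCast hx]
  norm_num

lemma hasDerivAt_rpow_one_third (hx : 0 < x) :
    HasDerivAt (fun s : ℝ => s ^ (1 / 3 : ℝ)) (x ^ (1 / 3 : ℝ) / (3 * x)) x := by
  refine (Real.hasDerivAt_rpow_const (Or.inl hx.ne')).congr_deriv ?_
  rw [Real.rpow_sub_one hx.ne']
  field_simp

lemma one_le_div_rpow_one_third (hx : 0 < x) (hv : 0 ≤ v) (h : x ≤ v ^ 3) :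
    1 ≤ v / x ^ (1 / 3 : ℝ) := by
  rw [one_le_div (by positivity)]
  exact le_of_pow_le_pow_left₀ three_ne_zero hv (by rwa [rpow_one_third_pow_three hx.le])

lemma pdv_eq_of_hasDerivAt {f : P2 → ℝ} {p : P2} {m : ℝ} (hf : DifferentiableAt ℝ f p)
    (hm : HasDerivAt (fun w => f (p.1, w)) m p.2) : pdv f p = m :=
  (HasFDerivAt.comp_hasDerivAt (x := p.2) (f := fun w : ℝ => (p.1, w)) hf.hasFDerivAt
    ((hasDerivAt_const p.2 p.1).prodMk (hasDerivAt_id p.2))).unique hm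

lemma pdx_eq_of_hasDerivAt {f : P2 → ℝ} {p : P2} {m : ℝ} (hf : DifferentiableAt ℝ f p)
    (hm : HasDerivAt (fun s => f (s, p.2)) m p.1) : pdx f p = m :=
  (HasFDerivAt.comp_hasDerivAt (x := p.1) (f := fun s : ℝ => (s, p.2)) hf.hasFDerivAt
    ((hasDerivAt_id p.1).prodMk (hasDerivAt_const p.1 p.2))).unique hm

/-- `ψ` is homogeneous of degree `d` under `(x, v) ↦ (λ³ x, λ v)` on `x > 0`, with restriction
`F` to the line `x = 1`. -/
def HasProfile (d : ℤ) (ψ : P2 → ℝ) (F : ℝ → ℝ) : Prop :=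
  ∀ p : P2, 0 < p.1 → ψ p = (p.1 ^ (1 / 3 : ℝ)) ^ d * F (p.2 / p.1 ^ (1 / 3 : ℝ))

namespace HasProfile

variable {d : ℤ} {ψ : P2 → ℝ} {F : ℝ → ℝ} {n : WithTop ℕ∞} (h : HasProfile d ψ F)
include h

lemma contDiffAt (hF : ContDiff ℝ n F) {p : P2} (hp : 0 < p.1) : ContDiffAt ℝ n ψ p := by
  have hσ : p.1 ^ (1 / 3 : ℝ) ≠ 0 := by positivity
  have hroot : ContDiffAt ℝ n (fun q : P2 => q.1 ^ (1 / 3 : ℝ)) p :=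
    contDiffAt_fst.rpow_const_of_ne hp.ne'
  have hpow : ContDiffAt ℝ n (fun q : P2 => (q.1 ^ (1 / 3 : ℝ)) ^ d) p := by
    cases d with
    | ofNat m => simpa only [Int.ofNat_eq_natCast, zpow_natCast] using hroot.pow m
    | negSucc m =>
      simpa only [zpow_negSucc] using (hroot.pow (m + 1)).fun_inv (pow_ne_zero _ hσ)
  refine (hpow.mul (hF.contDiffAt.comp p (contDiffAt_snd.div hroot hσ))).congr_of_eventuallyEq ?_
  filter_upwards [continuousAt_fst.eventually (lt_mem_nhds hp)] with q hq
  exact h q hq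

lemma hasDerivAt_fst (hF : Differentiable ℝ F) (hx : 0 < x) (v : ℝ) :
    HasDerivAt (fun s => ψ (s, v)) ((x ^ (1 / 3 : ℝ)) ^ (d - 3) *
      ((d * F (v / x ^ (1 / 3 : ℝ)) -
        v / x ^ (1 / 3 : ℝ) * deriv F (v / x ^ (1 / 3 : ℝ))) / 3)) x := by
  have hσ : x ^ (1 / 3 : ℝ) ≠ 0 := by positivity
  have hroot := hasDerivAt_rpow_one_third hx
  have hprod := ((hasDerivAt_zpow d _ (Or.inl hσ)).comp x hroot).mul
    ((hF (v / x ^ (1 / 3 : ℝ))).hasDerivAt.comp x ((hasDerivAt_const x v).div hroot hσ))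
  refine (hprod.congr_of_eventuallyEq ?_).congr_deriv ?_
  · filter_upwards [lt_mem_nhds hx] with s hs
    exact h (s, v) hs
  · have hcube := rpow_one_third_pow_three hx.le
    simp only [Function.comp_apply, Pi.div_apply]
    generalize x ^ (1 / 3 : ℝ) = σ at *
    subst hcube
    rw [zpow_sub₀ hσ d 3, zpow_sub_one₀ hσ]
    norm_cast
    field_simp
    ring

lemma hasDerivAt_snd (hF : Differentiable ℝ F) (hx : 0 < x) (v : ℝ) :
    HasDerivAt (fun w => ψ (x, w))
      ((x ^ (1 / 3 : ℝ)) ^ (d - 1) * deriv F (v / x ^ (1 / 3 : ℝ))) v := by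
  have hσ : x ^ (1 / 3 : ℝ) ≠ 0 := by positivity
  have hprod := ((hF (v / x ^ (1 / 3 : ℝ))).hasDerivAt.comp v
    ((hasDerivAt_id v).div_const (x ^ (1 / 3 : ℝ)))).const_mul ((x ^ (1 / 3 : ℝ)) ^ d)
  refine (hprod.congr_of_eventuallyEq (.of_forall fun w => h (x, w) hx)).congr_deriv ?_
  rw [zpow_sub_one₀ hσ]
  ring

protected lemma pdx (hF : ContDiff ℝ 1 F) :
    HasProfile (d - 3) (pdx ψ) fun y => (d * F y - y * deriv F y) / 3 := fun p hp =>
  pdx_eq_of_hasDerivAt ((h.contDiffAt hF hp).differentiableAt one_ne_zero)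
    (h.hasDerivAt_fst (hF.differentiable one_ne_zero) hp p.2)

protected lemma pdv (hF : ContDiff ℝ 1 F) : HasProfile (d - 1) (pdv ψ) (deriv F) := fun p hp =>
  pdv_eq_of_hasDerivAt ((h.contDiffAt hF hp).differentiableAt one_ne_zero)
    (h.hasDerivAt_snd (hF.differentiable one_ne_zero) hp p.2)

lemma iteratedDeriv_snd {k : ℕ} (hF : ContDiff ℝ k F) (hx : 0 < x) (v : ℝ) :
    iteratedDeriv k (fun w => ψ (x, w)) v
      = (x ^ (1 / 3 : ℝ)) ^ (d - k) * iteratedDeriv k F (v / x ^ (1 / 3 : ℝ)) := by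
  have hσ : x ^ (1 / 3 : ℝ) ≠ 0 := by positivity
  have hψ : (fun w => ψ (x, w))
      = fun w => (x ^ (1 / 3 : ℝ)) ^ d * F ((x ^ (1 / 3 : ℝ))⁻¹ * w) := by
    funext w
    rw [h (x, w) hx, ← div_eq_inv_mul]
  rw [hψ, iteratedDeriv_const_mul_field, iteratedDeriv_comp_const_mul hF, zpow_sub₀ hσ,
    zpow_natCast, inv_pow]
  ring_nf

lemma abs_iteratedDeriv_snd_le {k : ℕ} {g : ℝ → ℝ} {C : ℝ} (hF : ContDiff ℝ k F)
    (hg : ∀ y ∈ Ici (1 : ℝ), |iteratedDeriv k F y| ≤ C * g y) (hv : 0 ≤ v) (hx : 0 < x)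
    (hxv : x ≤ v ^ 3) :
    |iteratedDeriv k (fun w => ψ (x, w)) v|
      ≤ C * ((x ^ (1 / 3 : ℝ)) ^ (d - k) * g (v / x ^ (1 / 3 : ℝ))) := by
  rw [h.iteratedDeriv_snd hF hx, abs_mul, abs_of_nonneg (by positivity), mul_left_comm C]
  exact mul_le_mul_of_nonneg_left (hg _ (one_le_div_rpow_one_third hx hv hxv)) (by positivity)

lemma tendsto_nhdsGT_zero {c : ℝ} (hF : Tendsto (fun y => F y / y ^ d) atTop (𝓝 c)) (hv : 0 < v) :
    Tendsto (fun x => ψ (x, v)) (𝓝[>] 0) (𝓝 (c * v ^ d)) := by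
  have hroot : Tendsto (fun x : ℝ => x ^ (1 / 3 : ℝ)) (𝓝[>] 0) (𝓝[>] 0) := by
    refine tendsto_nhdsWithin_iff.2 ⟨?_, ?_⟩
    · simpa using (Real.continuousAt_rpow_const 0 (1 / 3)
        (Or.inr (by norm_num))).tendsto.mono_left nhdsWithin_le_nhds
    · filter_upwards [self_mem_nhdsWithin] with x hx using Real.rpow_pos_of_pos hx _
  have hy : Tendsto (fun x : ℝ => v / x ^ (1 / 3 : ℝ)) (𝓝[>] 0) atTop :=
    (tendsto_inv_nhdsGT_zero.comp hroot).const_mul_atTop hv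
  refine ((hF.comp hy).mul_const (v ^ d)).congr' ?_
  filter_upwards [self_mem_nhdsWithin] with x hx
  have hσ : 0 < x ^ (1 / 3 : ℝ) := Real.rpow_pos_of_pos hx _
  rw [h (x, v) hx, Function.comp_apply, div_zpow]
  field_simp

lemma hasDerivAt_fst_of_isProfile (hF : IsProfile d F) (hx : 0 < x) (hv : v ≠ 0) :
    HasDerivAt (fun s => ψ (s, v))
      ((x ^ (1 / 3 : ℝ)) ^ (d - 2) * iteratedDeriv 2 F (v / x ^ (1 / 3 : ℝ)) / v) x := by
  have hσ : x ^ (1 / 3 : ℝ) ≠ 0 := by positivity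
  refine (h.hasDerivAt_fst (hF.contDiff.differentiable (by simp)) hx v).congr_deriv ?_
  rw [hF.ode, show d - 2 = d - 3 + 1 by ring, zpow_add_one₀ hσ]
  field_simp

lemma mul_pdx_eq_pdv_pdv (hF : IsProfile d F) {p : P2} (hp : 0 < p.1) :
    p.2 * pdx ψ p = pdv (pdv ψ) p := by
  have hσ : p.1 ^ (1 / 3 : ℝ) ≠ 0 := by positivity
  have hD : deriv (deriv F) = iteratedDeriv 2 F := by rw [iteratedDeriv_succ, iteratedDeriv_one]
  have hF₁ : ContDiff ℝ 1 F := contDiff_infty.1 hF.contDiff 1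
  have hF₂ : ContDiff ℝ 1 (deriv F) := by
    simpa using contDiff_infty.1 (hF.contDiff_iteratedDeriv 1) 1
  rw [h.pdx hF₁ p hp, (h.pdv hF₁).pdv hF₂ p hp, show d - 1 - 1 = d - 3 + 1 by ring,
    zpow_add_one₀ hσ, hD, hF.ode]
  field_simp

end HasProfile

end SelfSimilar

section Estimates

variable {ψ : P2 → ℝ} {F : ℝ → ℝ} {x x₁ x₂ v C ε : ℝ}

namespace HasProfile

variable (h : HasProfile 2 ψ F) (hF : IsProfile 2 F)
include h hF

/-- The bound `|∂ₓψ| ≤ C / v` holds on `x ≤ v³`, because `v ∂ₓψ = F''(v / x ^ (1 / 3))`. -/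
lemma abs_sub_le (hC : ∀ y ∈ Ici (1 : ℝ), |iteratedDeriv 2 F y| ≤ C) (hv : 0 < v)
    (hx₁ : x₁ ∈ Ioc 0 (v ^ 3)) (hx₂ : x₂ ∈ Ioc 0 (v ^ 3)) :
    |ψ (x₁, v) - ψ (x₂, v)| ≤ C / v * |x₁ - x₂| := by
  refine (convex_Ioc 0 (v ^ 3)).norm_image_sub_le_of_norm_hasDerivWithin_le
    (f := fun s => ψ (s, v)) (fun x hx =>
      (h.hasDerivAt_fst_of_isProfile (by exact_mod_cast hF) hx.1 hv.ne').hasDerivWithinAt)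
    (fun x hx => ?_) hx₂ hx₁
  rw [sub_self, zpow_zero, one_mul, norm_div, Real.norm_of_nonneg hv.le]
  gcongr
  exact hC _ (one_le_div_rpow_one_third hx.1 hv.le hx.2)

variable (h₀ : 0 < F 0) (h₁ : 0 < deriv F 0)
include h₀ h₁

lemma exists_abs_iteratedDeriv_snd_le_of_le_two {k : ℕ} (hk : k ≤ 2) :
    ∃ C, 0 < C ∧ ∀ x v : ℝ, 0 < v → 0 < x → x ≤ v ^ 3 →
      |iteratedDeriv k (fun w => ψ (x, w)) v| ≤ C * v ^ (2 - k) := by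
  obtain ⟨C, hC₀, hC⟩ := hF.exists_abs_iteratedDeriv_le_of_le_two h₀ h₁ hk
  refine ⟨C, hC₀, fun x v hv hx hxv =>
    (h.abs_iteratedDeriv_snd_le (contDiff_infty.1 hF.contDiff k) hC hv.le hx hxv).trans_eq ?_⟩
  have hexp : (2 - k : ℤ) = (2 - k : ℕ) := by omega
  rw [hexp, zpow_natCast, ← mul_pow, mul_div_cancel₀ _ (by positivity)]

lemma exists_abs_iteratedDeriv_snd_le_of_two_lt {k : ℕ} (hk : 2 < k) :
    ∃ C, 0 < C ∧ ∀ x v : ℝ, 0 < v → 0 < x → x ≤ v ^ 3 →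
      |iteratedDeriv k (fun w => ψ (x, w)) v| ≤ C * (x / v ^ (k + 1)) := by
  obtain ⟨C, hC₀, hC⟩ := hF.exists_abs_iteratedDeriv_le_of_two_lt h₀ h₁ hk
  refine ⟨C, hC₀, fun x v hv hx hxv =>
    (h.abs_iteratedDeriv_snd_le (contDiff_infty.1 hF.contDiff k) hC hv.le hx hxv).trans_eq ?_⟩
  have hσ : 0 < x ^ (1 / 3 : ℝ) := by positivity
  have hcube : (x ^ (1 / 3 : ℝ)) ^ (2 - k : ℤ) * (x ^ (1 / 3 : ℝ)) ^ (k + 1) = x := by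
    rw [← zpow_natCast, ← zpow_add₀ hσ.ne']
    convert rpow_one_third_pow_three hx.le using 1
    rw [← zpow_natCast]
    congr 1
    push_cast
    ring
  rw [div_pow, inv_div, mul_div_assoc', hcube]

/-- The region `x ≤ v ^ (k + 1)` comes from the bound `C x / v ^ (k + 1)` for `k > 2`. -/
lemma exists_abs_iteratedDeriv_snd_le (k : ℕ) :
    ∃ C, 0 < C ∧ ∀ v ∈ Ioc (0 : ℝ) 1, ∀ x : ℝ, 0 < x → x ≤ v ^ (k + 1) → x ≤ v ^ 3 →
      |iteratedDeriv k (fun w => ψ (x, w)) v| ≤ C := by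
  rcases le_or_gt k 2 with hk | hk
  · obtain ⟨C, hC₀, hC⟩ := h.exists_abs_iteratedDeriv_snd_le_of_le_two hF h₀ h₁ hk
    exact ⟨C, hC₀, fun v hv x hx _ hxv => (hC x v hv.1 hx hxv).trans
      (mul_le_of_le_one_right hC₀.le (pow_le_one₀ hv.1.le hv.2))⟩
  · obtain ⟨C, hC₀, hC⟩ := h.exists_abs_iteratedDeriv_snd_le_of_two_lt hF h₀ h₁ hk
    exact ⟨C, hC₀, fun v hv x hx hxk hxv => (hC x v hv.1 hx hxv).trans
      (mul_le_of_le_one_right hC₀.le (div_le_one_of_le₀ hxk (pow_pos hv.1 _).le))⟩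

end HasProfile

lemma le_mul_rpow_one_sub {δ : ℝ} (hδ : 0 ≤ δ) (hv : 0 ≤ v) (hε : 0 < ε) (h : δ ≤ v ^ (1 / ε)) :
    δ ≤ v * δ ^ (1 - ε) := by
  rcases hδ.eq_or_lt with rfl | hδ
  · positivity
  calc δ = δ ^ ε * δ ^ (1 - ε) := by rw [← Real.rpow_add hδ, add_sub_cancel, Real.rpow_one]
    _ ≤ v * δ ^ (1 - ε) := by
      gcongr
      rwa [one_div, Real.le_rpow_inv_iff_of_pos hδ.le hv hε] at h

lemma HasProfile.exists_abs_sub_le_mul_rpow (h : HasProfile 2 ψ F) (hF : IsProfile 2 F)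
    (h₀ : 0 < F 0) (h₁ : 0 < deriv F 0) (hε : 0 < ε) (hε' : ε ≤ 1 / 3) :
    ∃ c, 0 < c ∧ ∀ v ∈ Ioc (0 : ℝ) 1, ∀ x₁ x₂ : ℝ,
      0 < x₁ → x₁ ≤ v ^ (1 / ε) → 0 < x₂ → x₂ ≤ v ^ (1 / ε) →
      |ψ (x₁, v) - ψ (x₂, v)| ≤ c * |x₁ - x₂| ^ (1 - ε) := by
  obtain ⟨C, hC₀, hC⟩ := hF.exists_abs_iteratedDeriv_le_of_le_two h₀ h₁ le_rfl
  simp only [Nat.sub_self, pow_zero, mul_one] at hC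
  refine ⟨C, hC₀, fun v ⟨hv, hv₁⟩ x₁ x₂ hx₁ hx₁v hx₂ hx₂v => ?_⟩
  have hcube : v ^ (1 / ε) ≤ v ^ 3 := by
    rw [← Real.rpow_natCast]
    refine Real.rpow_le_rpow_of_exponent_ge hv hv₁ ?_
    rw [le_div_iff₀ hε]
    push_cast
    linarith
  have hdist : |x₁ - x₂| ≤ v ^ (1 / ε) := abs_le.2 ⟨by linarith, by linarith⟩
  calc |ψ (x₁, v) - ψ (x₂, v)| ≤ C / v * |x₁ - x₂| :=
        h.abs_sub_le hF hC hv ⟨hx₁, hx₁v.trans hcube⟩ ⟨hx₂, hx₂v.trans hcube⟩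
    _ ≤ C / v * (v * |x₁ - x₂| ^ (1 - ε)) := by
        gcongr
        exact le_mul_rpow_one_sub (abs_nonneg _) hv.le hε hdist
    _ = C * |x₁ - x₂| ^ (1 - ε) := by field_simp

end Estimates

/-! ### The functions `ψ_l` -/

section Psi

/-- The constant `C_l` in the definition of `ψ_l`. -/
def psiC (l : ℕ) : ℝ :=
  (Real.Gamma (2 / 3) * Real.Gamma (-(3 * (l : ℝ) + 1) / 3))
    / (Real.Gamma (-(3 * (l : ℝ) + 2) / 3) * Real.Gamma (4 / 3))

lemma Gamma_neg_add_div_three_eq (l : ℕ) {r : ℝ} (hr : 0 ≤ r) :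
    Real.Gamma (-(3 * (l : ℝ) + r) / 3)
      = -((3 * ((l + 1 : ℕ) : ℝ) + r) / 3) *
        Real.Gamma (-(3 * ((l + 1 : ℕ) : ℝ) + r) / 3) := by
  have h : -((3 * ((l + 1 : ℕ) : ℝ) + r) / 3) ≠ 0 := neg_ne_zero.2 (by positivity)
  rw [neg_div, neg_div, ← Real.Gamma_add_one h]
  congr 1
  push_cast
  ring

lemma psiC_succ (l : ℕ) :
    (3 * ((l + 1 : ℕ) : ℝ) + 1) * psiC (l + 1) = (3 * ((l + 1 : ℕ) : ℝ) + 2) * psiC l := by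
  have h : (3 * ((l + 1 : ℕ) : ℝ) + 2) ≠ 0 := by positivity
  rw [psiC, psiC, Gamma_neg_add_div_three_eq l zero_le_one,
    Gamma_neg_add_div_three_eq l zero_le_two]
  field_simp

lemma psiC_pos (l : ℕ) : 0 < psiC l := by
  induction l with
  | zero =>
    have h₁ : Real.Gamma (-1 / 3) < 0 := by
      have h := Real.Gamma_add_one (s := -1 / 3) (by norm_num)
      have := Real.Gamma_pos_of_pos (s := -1 / 3 + 1) (by norm_num)
      linarith
    have h₂ : Real.Gamma (-2 / 3) < 0 := by
      have h := Real.Gamma_add_one (s := -2 / 3) (by norm_num)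
      have := Real.Gamma_pos_of_pos (s := -2 / 3 + 1) (by norm_num)
      linarith
    simp only [psiC, Nat.cast_zero, mul_zero, zero_add]
    exact div_pos_of_neg_of_neg
      (mul_neg_of_pos_of_neg (Real.Gamma_pos_of_pos (by norm_num)) h₁)
      (mul_neg_of_neg_of_pos h₂ (Real.Gamma_pos_of_pos (by norm_num)))
  | succ l ih =>
    refine pos_of_mul_pos_right ?_ (by positivity : (0 : ℝ) ≤ 3 * ((l + 1 : ℕ) : ℝ) + 1)
    rw [psiC_succ]
    positivity

lemma hasDerivAt_rpow_mul_kummerM (p b c : ℝ) {x : ℝ} (hx : 0 < x) :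
    HasDerivAt (fun s => s ^ p * kummerM (-p) b (c / s))
      (p * (x ^ (p - 1) * kummerM (1 - p) b (c / x))) x := by
  have hdiv : HasDerivAt (fun s : ℝ => c / s) (-(c / x / x)) x := by
    refine ((hasDerivAt_inv hx.ne').const_mul c).congr_deriv ?_
    field_simp
  have hM := ((contDiff_kummerM (-p) b).differentiable (by simp) (c / x)).hasDerivAt
  refine ((Real.hasDerivAt_rpow_const (p := p) (Or.inl hx.ne')).mul
    (hM.comp x hdiv)).congr_deriv ?_
  have hraise := kummerM_add_one_left (-p) b (c / x)
  rw [neg_add_eq_sub] at hraise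
  rw [Function.comp_apply, Real.rpow_sub_one hx.ne']
  linear_combination -(x ^ p / x) * hraise

lemma psiL_eq (l : ℕ) {x : ℝ} (hx : 0 < x) (v : ℝ) :
    psiL l x v = x ^ ((3 * l + 2 : ℝ) / 3)
        * kummerM (-((3 * l + 2 : ℝ) / 3)) (2 / 3) (-v ^ 3 / 9 / x)
      + psiC l / 9 ^ (1 / 3 : ℝ) * v * (x ^ ((3 * l + 1 : ℝ) / 3)
        * kummerM (-((3 * l + 1 : ℝ) / 3)) (4 / 3) (-v ^ 3 / 9 / x)) := by
  have hexp : (3 * l + 2 : ℝ) / 3 = (3 * l + 1 : ℝ) / 3 + 1 / 3 := by ring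
  rw [psiL, ← psiC, ← div_div, neg_div 3 (3 * (l : ℝ) + 2), neg_div 3 (3 * (l : ℝ) + 1),
    Real.mul_rpow (by norm_num) hx.le, mul_add]
  congr 1
  rw [hexp, Real.rpow_add hx]
  field_simp

lemma hasDerivAt_psiL_succ (l : ℕ) {x : ℝ} (hx : 0 < x) (v : ℝ) :
    HasDerivAt (fun s => psiL (l + 1) s v)
      ((3 * ((l + 1 : ℕ) : ℝ) + 2) / 3 * psiL l x v) x := by
  have h₂ := hasDerivAt_rpow_mul_kummerM ((3 * ((l + 1 : ℕ) : ℝ) + 2) / 3) (2 / 3)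
    (-v ^ 3 / 9) hx
  have h₁ := hasDerivAt_rpow_mul_kummerM ((3 * ((l + 1 : ℕ) : ℝ) + 1) / 3) (4 / 3)
    (-v ^ 3 / 9) hx
  refine ((h₂.add (h₁.const_mul (psiC (l + 1) / 9 ^ (1 / 3 : ℝ) * v))).congr_of_eventuallyEq
    ?_).congr_deriv ?_
  · filter_upwards [lt_mem_nhds hx] with s hs
    exact psiL_eq (l + 1) hs v
  · have hsub : ∀ r : ℝ, (3 * ((l + 1 : ℕ) : ℝ) + r) / 3 - 1 = (3 * l + r) / 3 := fun r => by
      push_cast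
      ring
    have hsub' : ∀ r : ℝ, 1 - (3 * ((l + 1 : ℕ) : ℝ) + r) / 3 = -((3 * l + r) / 3) := fun r => by
      push_cast
      ring
    rw [psiL_eq l hx, hsub, hsub, hsub', hsub']
    linear_combination (v / 9 ^ (1 / 3 : ℝ) / 3 * (x ^ ((3 * l + 1 : ℝ) / 3)
      * kummerM (-((3 * l + 1 : ℝ) / 3)) (4 / 3) (-v ^ 3 / 9 / x))) * psiC_succ l

/-- The restriction of `ψ_l` to the line `x = 1`, as a function of `v`. -/
def psiProfile (l : ℕ) (y : ℝ) : ℝ :=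
  kummerM (-(3 * l + 2) / 3) (2 / 3) (-y ^ 3 / 9)
    + psiC l / 9 ^ (1 / 3 : ℝ) * (y * kummerM (-(3 * l + 1) / 3) (4 / 3) (-y ^ 3 / 9))

lemma hasProfile_psiL (l : ℕ) :
    HasProfile (3 * l + 2) (fun p => psiL l p.1 p.2) (psiProfile l) := by
  rintro ⟨x, v⟩ hx
  have hpow : x ^ ((3 * l + 2 : ℝ) / 3) = (x ^ (1 / 3 : ℝ)) ^ (3 * l + 2 : ℤ) := by
    rw [← Real.rpow_mul_intCast hx.le]
    push_cast
    ring_nf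
  have harg : -(v / x ^ (1 / 3 : ℝ)) ^ 3 / 9 = -(v ^ 3) / (9 * x) := by
    rw [div_pow, rpow_one_third_pow_three hx.le]
    field_simp
  dsimp only at hx ⊢
  rw [psiProfile, harg, psiL, ← psiC, Real.mul_rpow (by norm_num) hx.le, hpow]
  field_simp

lemma isProfile_psiProfile (l : ℕ) : IsProfile (3 * l + 2) (psiProfile l) := by
  have h := isProfile_mul_kummerM (3 * l + 2)
  rw [show 1 - (3 * l + 2 : ℝ) = -(3 * l + 1) by ring] at h
  exact (isProfile_kummerM (3 * l + 2)).add (h.const_mul (psiC l / 9 ^ (1 / 3 : ℝ)))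

lemma psiProfile_apply_zero (l : ℕ) : psiProfile l 0 = 1 := by
  simp [psiProfile, kummerM_zero]

lemma deriv_psiProfile_zero (l : ℕ) : deriv (psiProfile l) 0 = psiC l / 9 ^ (1 / 3 : ℝ) := by
  have h := (hasDerivAt_kummerM_comp_cube (-(3 * l + 2) / 3) (2 / 3) 0).add
    (((hasDerivAt_id 0).mul (hasDerivAt_kummerM_comp_cube (-(3 * l + 1) / 3) (4 / 3) 0)).const_mul
      (psiC l / 9 ^ (1 / 3 : ℝ)))
  refine (HasDerivAt.deriv h).trans ?_
  simp [kummerM_zero]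

lemma deriv_psiProfile_zero_pos (l : ℕ) : 0 < deriv (psiProfile l) 0 := by
  have := psiC_pos l
  rw [deriv_psiProfile_zero]
  positivity

end Psi

theorem statement_19 :
    -- (i)
    (ContDiffOn ℝ 2 (fun p : P2 => psiL 0 p.1 p.2) (Set.Ioi (0:ℝ) ×ˢ (Set.univ : Set ℝ)) ∧
      ∀ p ∈ Set.Ioi (0:ℝ) ×ˢ (Set.univ : Set ℝ),
        p.2 * pdx (fun q : P2 => psiL 0 q.1 q.2) p
          = pdv (pdv (fun q : P2 => psiL 0 q.1 q.2)) p) ∧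
    -- (ii)
    (∃ cs : ℝ, cs ≠ 0 ∧ ∀ v : ℝ, 0 < v →
      Tendsto (fun x => psiL 0 x v) (nhdsWithin 0 (Set.Ioi 0)) (nhds (cs * v ^ 2))) ∧
    -- (iii)
    (∀ l : ℕ, 1 ≤ l → ∀ x v : ℝ, 0 < x →
      HasDerivAt (fun s => psiL l s v) ((3 * (l : ℝ) + 2) / 3 * psiL (l - 1) x v) x) ∧
    -- (iv)
    (∀ ε : ℝ, 0 < ε → ε < 1/3 → ∃ c : ℝ, 0 < c ∧
      ∀ v ∈ Set.Ioc (0:ℝ) 1, ∀ x₁ x₂ : ℝ,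
        0 < x₁ → x₁ ≤ v ^ (1/ε) → 0 < x₂ → x₂ ≤ v ^ (1/ε) →
        |psiL 0 x₁ v - psiL 0 x₂ v| ≤ c * |x₁ - x₂| ^ (1 - ε)) ∧
    -- (v)
    (∀ k : ℕ, ∃ c : ℝ, 0 < c ∧
      ∀ v ∈ Set.Ioc (0:ℝ) 1, ∀ x : ℝ,
        0 < x → x ≤ v ^ (k + 1) → x ≤ v ^ 3 →
        |iteratedDeriv k (fun w => psiL 0 x w) v| ≤ c) := by
  have hψ : HasProfile 2 (fun p => psiL 0 p.1 p.2) (psiProfile 0) := by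
    simpa using hasProfile_psiL 0
  have hF : IsProfile 2 (psiProfile 0) := by simpa using isProfile_psiProfile 0
  have h₀ : 0 < psiProfile 0 0 := by simp [psiProfile_apply_zero]
  have h₁ : 0 < deriv (psiProfile 0) 0 := deriv_psiProfile_zero_pos 0
  refine ⟨⟨fun p hp => ?_, fun p hp => ?_⟩, ?_, ?_, ?_, ?_⟩
  · exact (hψ.contDiffAt (contDiff_infty.1 hF.contDiff 2) hp.1).contDiffWithinAt
  · exact hψ.mul_pdx_eq_pdv_pdv (by exact_mod_cast hF) hp.1
  · obtain ⟨c, hc₀, hc⟩ := hF.exists_tendsto_div_sq h₀ h₁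
    refine ⟨c, hc₀.ne', fun v hv => ?_⟩
    exact_mod_cast hψ.tendsto_nhdsGT_zero (by exact_mod_cast hc) hv
  · intro l hl x v hx
    obtain ⟨m, rfl⟩ := Nat.exists_eq_add_of_le' hl
    exact hasDerivAt_psiL_succ m hx v
  · exact fun ε hε hε' => hψ.exists_abs_sub_le_mul_rpow hF h₀ h₁ hε hε'.le
  · exact hψ.exists_abs_iteratedDeriv_snd_le hF h₀ h₁
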